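/- arXiv:2302.06005 — 3 statements merged into one kernel-verified Lean document; each statement's English description precedes it below -/
import Mathlib

section
/- Let (Ω,ρ,μ) be a metric probability space, let β ∈ (0,1], L > 0, and let 0 < ε < min(L, 1/4). Then the bracketing entropy of the weak-average-Hölder class satisfies log N_[](H̃öl^β_L(Ω,μ), L1(μ), ε) ≤ N_Ω((ε/(128·L·log₂(1/ε)))^{1/β}) · log(16·log₂(1/ε)/ε), where N_Ω denotes the covering number of Ω. -/
open MeasureTheory Set Metric
open scoped ENNReal NNReal

noncomputable section

/-- The `β`-hslope of `f` at `x`: `Λ_f^β(x) = sup_{y ≠ x} |f x - f y| / ρ(x,y)^β`. -/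
def hslope {Ω : Type*} [MetricSpace Ω] (β : ℝ) (f : Ω → ℝ) (x : Ω) : ℝ≥0∞ :=
  ⨆ (y : Ω) (_ : y ≠ x), ENNReal.ofReal (|f x - f y| / dist x y ^ β)

/-- The average `β`-hslope of `f` with respect to `μ`: `E_{X∼μ}[Λ_f^β(X)]`. -/
def avgSlope {Ω : Type*} [MetricSpace Ω] [MeasurableSpace Ω] (μ : Measure Ω) (β : ℝ)
    (f : Ω → ℝ) : ℝ≥0∞ :=
  ∫⁻ x, hslope β f x ∂μ

/-- The weak average `β`-hslope of `f` with respect to `μ`: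
`sup_{t>0} t · μ {x : Λ_f^β(x) ≥ t}`. -/
def weakAvgSlope {Ω : Type*} [MetricSpace Ω] [MeasurableSpace Ω] (μ : Measure Ω) (β : ℝ)
    (f : Ω → ℝ) : ℝ≥0∞ :=
  ⨆ (t : ℝ) (_ : 0 < t), ENNReal.ofReal t * μ {x | ENNReal.ofReal t ≤ hslope β f x}

/-- The class `H̄öl^β_L(Ω,μ)` of measurable `[0,1]`-valued functions with average
`β`-hslope at most `L`. -/
def avgHolderClass {Ω : Type*} [MetricSpace Ω] [MeasurableSpace Ω] (μ : Measure Ω)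
    (β L : ℝ) : Set (Ω → ℝ) :=
  {f | Measurable f ∧ (∀ x, f x ∈ Icc (0:ℝ) 1) ∧ avgSlope μ β f ≤ ENNReal.ofReal L}

/-- The class `H̃öl^β_L(Ω,μ)` of measurable `[0,1]`-valued functions with weak average
`β`-hslope at most `L`. -/
def weakHolderClass {Ω : Type*} [MetricSpace Ω] [MeasurableSpace Ω] (μ : Measure Ω)
    (β L : ℝ) : Set (Ω → ℝ) :=
  {f | Measurable f ∧ (∀ x, f x ∈ Icc (0:ℝ) 1) ∧ weakAvgSlope μ β f ≤ ENNReal.ofReal L}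

/-- The covering number `N_Ω(t)`: minimal cardinality of a set of points whose closed
`t`-balls cover `Ω` (`∞` if no finite cover exists). -/
def coveringNumber (Ω : Type*) [MetricSpace Ω] (t : ℝ) : ℝ≥0∞ :=
  ⨅ (A : Finset Ω) (_ : ∀ x : Ω, ∃ a ∈ A, dist x a ≤ t), (A.card : ℝ≥0∞)

/-- `B` is a finite set of `ε`-brackets (with respect to `L1(μ)`) covering `F`. -/
def IsBracketing {Ω : Type*} [MeasurableSpace Ω] (μ : Measure Ω) (F : Set (Ω → ℝ))
    (ε : ℝ) (B : Finset ((Ω → ℝ) × (Ω → ℝ))) : Prop :=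
  (∀ lu ∈ B, (∀ x, lu.1 x ∈ Icc (0:ℝ) 1 ∧ lu.2 x ∈ Icc (0:ℝ) 1) ∧
      ∫⁻ x, ENNReal.ofReal |lu.2 x - lu.1 x| ∂μ ≤ ENNReal.ofReal ε) ∧
    ∀ f ∈ F, ∃ lu ∈ B, ∀ x, lu.1 x ≤ f x ∧ f x ≤ lu.2 x

/-- The bracketing number `N_[](F, L1(μ), ε)`. -/
def bracketingNumber {Ω : Type*} [MetricSpace Ω] [MeasurableSpace Ω] (F : Set (Ω → ℝ))
    (μ : Measure Ω) (ε : ℝ) : ℝ≥0∞ :=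
  ⨅ (B : Finset ((Ω → ℝ) × (Ω → ℝ))) (_ : IsBracketing μ F ε B), (B.card : ℝ≥0∞)

/-- Logarithm of an extended-real cardinality: equals `log N` for finite natural `N`
and `∞` when `N = ∞`. -/
def elog (N : ℝ≥0∞) : ℝ≥0∞ :=
  ⨅ (m : ℕ) (_ : N ≤ (m : ℝ≥0∞)), ENNReal.ofReal (Real.log m)

/-- The `L1` risk `L_D(f) = E_{(X,Y)∼D} |f(X) − Y|`. -/
def risk {Ω : Type*} [MetricSpace Ω] [MeasurableSpace Ω] (D : Measure (Ω × ℝ))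
    (f : Ω → ℝ) : ℝ≥0∞ :=
  ∫⁻ p, ENNReal.ofReal |f p.1 - p.2| ∂D

/-- The empirical `L1` risk `L_S(f) = (1/n) Σ_i |f(X_i) − Y_i|`. -/
def empRisk {Ω : Type*} [MetricSpace Ω] {n : ℕ} (S : Fin n → Ω × ℝ) (f : Ω → ℝ) : ℝ :=
  (n : ℝ)⁻¹ * ∑ i, |f (S i).1 - (S i).2|

/-- `D` is realizable by the class `F`. -/
def Realizable {Ω : Type*} [MetricSpace Ω] [MeasurableSpace Ω] (D : Measure (Ω × ℝ))
    (F : Set (Ω → ℝ)) : Prop :=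
  ∃ f ∈ F, risk D f = 0

/-- The empirical average `β`-hslope of `f` over the sample points `X_1,…,X_n`. -/
def empAvgSlope {Ω : Type*} [MetricSpace Ω] (β : ℝ) {n : ℕ} (X : Fin n → Ω)
    (f : Ω → ℝ) : ℝ :=
  (n : ℝ)⁻¹ * ∑ i, ⨆ (j : Fin n) (_ : X j ≠ X i), |f (X i) - f (X j)| / dist (X i) (X j) ^ β


/-- Index set of dyadic brackets of level at most `J`. -/
abbrev DyIdx (J : ℕ) : Type := Σ j : Fin (J + 1), Fin (2 ^ (j : ℕ))

lemma card_DyIdx (J : ℕ) : Fintype.card (DyIdx J) + 1 = 2 ^ (J + 1) := by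
  have h : Fintype.card (DyIdx J) = ∑ j ∈ Finset.range (J + 1), 2 ^ j := by
    rw [Fintype.card_sigma, Finset.sum_range]
    simp
  rw [h]
  have := Nat.geomSum_eq (m := 2) le_rfl (J + 1)
  have h2 : 1 ≤ 2 ^ (J + 1) := Nat.one_le_two_pow
  rw [this]
  simp
  omega

def dyLo {J : ℕ} (d : DyIdx J) : ℝ := (d.2 : ℝ) / 2 ^ (d.1 : ℕ)
def dyHi {J : ℕ} (d : DyIdx J) : ℝ := min 1 (((d.2 : ℝ) + 2) / 2 ^ (d.1 : ℕ))

lemma dyLo_le {J : ℕ} (d : DyIdx J) : dyLo d ≤ dyHi d := by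
  unfold dyLo dyHi
  have h2 : (0:ℝ) < 2 ^ (d.1 : ℕ) := by positivity
  have hk : ((d.2 : ℕ) : ℝ) ≤ 2 ^ (d.1 : ℕ) := by exact_mod_cast d.2.2.le
  apply le_min
  · rw [div_le_one h2]; exact hk
  · gcongr; linarith

lemma dyLo_nonneg {J : ℕ} (d : DyIdx J) : 0 ≤ dyLo d := by unfold dyLo; positivity

lemma dyHi_le_one {J : ℕ} (d : DyIdx J) : dyHi d ≤ 1 := min_le_left _ _

lemma dy_width {J : ℕ} (d : DyIdx J) : |dyHi d - dyLo d| ≤ 2 / 2 ^ (d.1 : ℕ) := by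
  rw [abs_of_nonneg (by linarith [dyLo_le d])]
  have : dyHi d ≤ ((d.2 : ℝ) + 2) / 2 ^ (d.1 : ℕ) := min_le_right _ _
  unfold dyLo
  rw [add_div] at this
  linarith

lemma exists_dy (J : ℕ) (S : Set ℝ) (hS : S ⊆ Icc 0 1) :
    ∃ d : DyIdx J, (∀ y ∈ S, dyLo d ≤ y ∧ y ≤ dyHi d) ∧
      ((d.1 : ℕ) = J ∨ ∃ y ∈ S, ∃ z ∈ S, 1 / 2 ^ ((d.1 : ℕ) + 1) < y - z) := by
  classical
  let P : ℕ → Prop := fun j => ∀ y ∈ S, ∀ z ∈ S, y - z ≤ 1 / 2 ^ j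
  have hP0 : P 0 := by
    intro y hy z hz
    have := hS hy; have := hS hz
    simp only [mem_Icc] at *
    norm_num; linarith
  obtain ⟨j, hjJ, hPj, hmax⟩ : ∃ j, j ≤ J ∧ P j ∧ (j = J ∨ ¬ P (j + 1)) := by
    refine ⟨Nat.findGreatest P J, Nat.findGreatest_le _, Nat.findGreatest_spec (Nat.zero_le _) hP0, ?_⟩
    by_cases h : Nat.findGreatest P J = J
    · exact Or.inl h
    · right
      exact Nat.findGreatest_is_greatest (Nat.lt_succ_self _)
        (lt_of_le_of_ne (Nat.findGreatest_le _) h)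
  have h2 : (0:ℝ) < 2 ^ j := by positivity
  have hk : ∃ k : ℕ, k < 2 ^ j ∧ ∀ y ∈ S, (k : ℝ) / 2 ^ j ≤ y ∧ y ≤ ((k : ℝ) + 2) / 2 ^ j := by
    rcases S.eq_empty_or_nonempty with rfl | hne
    · exact ⟨0, by positivity, by simp⟩
    have hbdd : BddBelow S := ⟨0, fun y hy => (hS hy).1⟩
    have hm0 : 0 ≤ sInf S := le_csInf hne fun y hy => (hS hy).1
    have hm1 : sInf S ≤ 1 := by
      obtain ⟨y, hy⟩ := hne
      exact (csInf_le hbdd hy).trans (hS hy).2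
    have hm : ∀ y ∈ S, y ≤ sInf S + 1 / 2 ^ j := by
      intro y hy
      have : y - 1 / 2 ^ j ≤ sInf S := le_csInf hne fun z hz => by linarith [hPj y hy z hz]
      linarith
    obtain ⟨k, hk1, hk2, hk3⟩ : ∃ k : ℕ, k < 2 ^ j ∧ (k : ℝ) ≤ sInf S * 2 ^ j ∧
        sInf S * 2 ^ j ≤ k + 1 := by
      by_cases h : sInf S = 1
      · refine ⟨2 ^ j - 1, Nat.sub_lt (by positivity) one_pos, ?_, ?_⟩
        · rw [h, Nat.cast_sub Nat.one_le_two_pow]; push_cast; linarith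
        · rw [h, Nat.cast_sub Nat.one_le_two_pow]; push_cast; linarith
      · have hlt : sInf S < 1 := lt_of_le_of_ne hm1 h
        have hnn : 0 ≤ sInf S * 2 ^ j := by positivity
        refine ⟨⌊sInf S * 2 ^ j⌋₊, ?_, Nat.floor_le hnn, (Nat.lt_floor_add_one _).le⟩
        rw [Nat.floor_lt hnn]
        push_cast
        nlinarith
    refine ⟨k, hk1, fun y hy => ⟨?_, ?_⟩⟩
    · rw [div_le_iff₀ h2]
      have := csInf_le hbdd hy
      nlinarith
    · rw [le_div_iff₀ h2]
      have h3 := mul_le_mul_of_nonneg_right (hm y hy) h2.le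
      rw [add_mul, one_div, inv_mul_cancel₀ h2.ne'] at h3
      linarith
  obtain ⟨k, hk1, hk2⟩ := hk
  refine ⟨⟨⟨j, by omega⟩, ⟨k, hk1⟩⟩, fun y hy => ⟨(hk2 y hy).1, le_min (hS hy).2 (hk2 y hy).2⟩, ?_⟩
  rcases hmax with h | h
  · exact Or.inl h
  · right
    simp only [P] at h
    push Not at h
    obtain ⟨y, hy, z, hz, hyz⟩ := h
    exact ⟨y, hy, z, hz, hyz⟩

lemma exists_proj {Ω : Type*} [MetricSpace Ω] [MeasurableSpace Ω] [BorelSpace Ω] [Nonempty Ω]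
    (A : Finset Ω) (t : ℝ) (hA : ∀ x : Ω, ∃ a ∈ A, dist x a ≤ t) :
    ∃ p : Ω → A, (∀ S : Set A, MeasurableSet (p ⁻¹' S)) ∧ ∀ x : Ω, dist x (p x : Ω) ≤ t := by
  classical
  obtain ⟨a0, ha0, -⟩ := hA (Classical.arbitrary Ω)
  let e : ℕ → Ω := fun n => if h : n < A.card then (A.equivFin.symm ⟨n, h⟩ : Ω) else a0
  have heA : ∀ n, e n ∈ A := by
    intro n
    simp only [e]
    split_ifs
    · exact Subtype.prop _
    · exact ha0
  let I := SimpleFunc.nearestPtInd e A.card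
  refine ⟨fun x => ⟨e (I x), heA _⟩, fun S => ?_, fun x => ?_⟩
  · exact I.measurableSet_preimage ((fun n => (⟨e n, heA n⟩ : A)) ⁻¹' S)
  · obtain ⟨a, ha, hxa⟩ := hA x
    have hek : e (A.equivFin ⟨a, ha⟩) = a := by
      simp [e]
    have h := SimpleFunc.edist_nearestPt_le e x (k := A.equivFin ⟨a, ha⟩) (N := A.card)
      (A.equivFin ⟨a, ha⟩).2.le
    rw [hek] at h
    have h2 : edist (e (I x)) x ≤ edist a x := h
    rw [edist_dist, edist_dist, ENNReal.ofReal_le_ofReal_iff dist_nonneg] at h2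
    rw [dist_comm]
    calc _ ≤ dist a x := h2
      _ ≤ t := by rw [dist_comm]; exact hxa

lemma slope_big {Ω : Type*} [MetricSpace Ω] {β δ r : ℝ} (hβ0 : 0 < β) (hδ : 0 < δ) (hr : 0 < r)
    (f : Ω → ℝ) (x y : Ω) (hd : dist x y ^ β ≤ δ) (hf : r ≤ |f x - f y|) :
    ENNReal.ofReal (r / δ) ≤ hslope β f x := by
  have hne : y ≠ x := by
    rintro rfl
    simp at hf; linarith
  have hpos : 0 < dist x y ^ β := Real.rpow_pos_of_pos (dist_pos.2 hne.symm) _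
  refine le_trans (ENNReal.ofReal_le_ofReal ?_)
    (le_iSup₂ (f := fun (y : Ω) (_ : y ≠ x) => ENNReal.ofReal (|f x - f y| / dist x y ^ β)) y hne)
  gcongr

lemma exists_bracketing {Ω : Type*} [MetricSpace Ω] [MeasurableSpace Ω] [BorelSpace Ω]
    (μ : Measure Ω) [IsProbabilityMeasure μ]
    (β L ε t δ : ℝ) (J : ℕ) (hβ0 : 0 < β) (hβ1 : β ≤ 1) (hL : 0 < L)
    (hε0 : 0 < ε) (ht : 0 < t) (hδ : 2 * t ^ β = δ)
    (hJ : 2 / 2 ^ J + J * (8 * L * δ) ≤ ε)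
    (A : Finset Ω) (hA : ∀ x : Ω, ∃ a ∈ A, dist x a ≤ t) :
    ∃ B, IsBracketing μ (weakHolderClass μ β L) ε B ∧
      B.card ≤ Fintype.card (DyIdx J) ^ A.card := by
  classical
  haveI : Nonempty Ω := nonempty_of_isProbabilityMeasure μ
  obtain ⟨p, hpm, hpd⟩ := exists_proj A t hA
  have hδ0 : 0 < δ := by rw [← hδ]; positivity
  let br : (A → DyIdx J) → (Ω → ℝ) × (Ω → ℝ) := fun φ =>
    (fun x => dyLo (φ (p x)), fun x => dyHi (φ (p x)))
  let G : Finset (A → DyIdx J) := Finset.univ.filter fun φ =>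
    ∫⁻ x, ENNReal.ofReal |(br φ).2 x - (br φ).1 x| ∂μ ≤ ENNReal.ofReal ε
  refine ⟨G.image br, ⟨?_, ?_⟩, ?_⟩
  · intro lu hlu
    obtain ⟨φ, hφ, rfl⟩ := Finset.mem_image.1 hlu
    refine ⟨fun x => ?_, (Finset.mem_filter.1 hφ).2⟩
    have h1 := dyLo_le (φ (p x))
    have h2 := dyLo_nonneg (φ (p x))
    have h3 := dyHi_le_one (φ (p x))
    exact ⟨⟨h2, h1.trans h3⟩, ⟨h2.trans h1, h3⟩⟩
  · rintro f ⟨-, hf01, hfL⟩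
    have hex : ∀ a : A, ∃ d : DyIdx J, (∀ y ∈ f '' (p ⁻¹' {a}), dyLo d ≤ y ∧ y ≤ dyHi d) ∧
        ((d.1 : ℕ) = J ∨ ∃ y ∈ f '' (p ⁻¹' {a}), ∃ z ∈ f '' (p ⁻¹' {a}),
          1 / 2 ^ ((d.1 : ℕ) + 1) < y - z) := fun a => exists_dy J _ (by
        rintro _ ⟨x, -, rfl⟩; exact hf01 x)
    choose φ hφ1 hφ2 using hex
    refine ⟨br φ, Finset.mem_image_of_mem _ (Finset.mem_filter.2 ⟨Finset.mem_univ _, ?_⟩),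
      fun x => hφ1 (p x) _ ⟨x, rfl, rfl⟩⟩
    let E : ℕ → Set Ω := fun j => p ⁻¹' {a | ((φ a).1 : ℕ) = j}
    have hEm : ∀ j, MeasurableSet (E j) := fun j => hpm _
    have hE : ∀ j ∈ Finset.range J, ENNReal.ofReal (2 / 2 ^ j) * μ (E j)
        ≤ ENNReal.ofReal (8 * L * δ) := by
      intro j hj
      rw [Finset.mem_range] at hj
      set T : ℝ := (1 / 2 ^ (j + 2)) / δ with hT
      have hT0 : 0 < T := by positivity
      have hsub : E j ⊆ {x | ENNReal.ofReal T ≤ hslope β f x} := by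
        intro x hx
        have hx' : ((φ (p x)).1 : ℕ) = j := hx
        rcases hφ2 (p x) with h | ⟨_, ⟨y, hy, rfl⟩, _, ⟨z, hz, rfl⟩, hyz⟩
        · omega
        rw [hx'] at hyz
        have key : ∀ w, p w = p x → dist x w ^ β ≤ δ := by
          intro w hw
          have h1 : dist x w ≤ 2 * t := by
            have a1 := hpd x
            have a2 := hpd w
            rw [hw] at a2
            have := dist_triangle_right x w (p x : Ω)
            linarith
          calc dist x w ^ β ≤ (2 * t) ^ β := Real.rpow_le_rpow dist_nonneg h1 hβ0.le
            _ = 2 ^ β * t ^ β := Real.mul_rpow (by norm_num) ht.le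
            _ ≤ 2 * t ^ β := by
              gcongr
              calc (2:ℝ) ^ β ≤ 2 ^ (1:ℝ) := Real.rpow_le_rpow_of_exponent_le (by norm_num) hβ1
                _ = 2 := Real.rpow_one 2
            _ = δ := hδ
        have hr : (1:ℝ) / 2 ^ (j + 1) = 1 / 2 ^ (j + 2) + 1 / 2 ^ (j + 2) := by
          rw [pow_succ 2 (j + 1)]; field_simp; norm_num
        have hor : 1 / 2 ^ (j + 2) ≤ |f x - f y| ∨ 1 / 2 ^ (j + 2) ≤ |f x - f z| := by
          by_contra! hcon
          obtain ⟨c1, c2⟩ := hcon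
          rw [abs_lt] at c1 c2
          linarith [c1.1, c2.2]
        rcases hor with h | h
        · exact slope_big hβ0 hδ0 (by positivity) f x y (key y hy) h
        · exact slope_big hβ0 hδ0 (by positivity) f x z (key z hz) h
      have hw : ENNReal.ofReal T * μ {x | ENNReal.ofReal T ≤ hslope β f x} ≤ ENNReal.ofReal L :=
        le_trans (le_iSup₂ (f := fun (t : ℝ) (_ : 0 < t) =>
          ENNReal.ofReal t * μ {x | ENNReal.ofReal t ≤ hslope β f x}) T hT0) hfL
      have heq : (2:ℝ) / 2 ^ j = (8 * δ) * T := by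
        rw [hT, pow_add]; field_simp; norm_num
      calc ENNReal.ofReal (2 / 2 ^ j) * μ (E j)
          = ENNReal.ofReal (8 * δ) * (ENNReal.ofReal T * μ (E j)) := by
            rw [heq, ENNReal.ofReal_mul (by positivity), mul_assoc]
        _ ≤ ENNReal.ofReal (8 * δ) * ENNReal.ofReal L := by
            gcongr
            exact le_trans (by gcongr) hw
        _ = ENNReal.ofReal (8 * L * δ) := by
            rw [← ENNReal.ofReal_mul (by positivity)]; congr 1; ring
    calc ∫⁻ x, ENNReal.ofReal |(br φ).2 x - (br φ).1 x| ∂μ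
        ≤ ∫⁻ x, (ENNReal.ofReal (2 / 2 ^ J) + ∑ j ∈ Finset.range J,
            (E j).indicator (fun _ => ENNReal.ofReal (2 / 2 ^ j)) x) ∂μ := by
          apply lintegral_mono
          intro x
          have hw := ENNReal.ofReal_le_ofReal (dy_width (φ (p x)))
          have hlt := (φ (p x)).1.2
          refine le_trans (show _ ≤ _ from hw) ?_
          by_cases h : ((φ (p x)).1 : ℕ) = J
          · rw [h]; exact le_self_add
          · refine le_trans ?_ le_add_self
            have hm : ((φ (p x)).1 : ℕ) ∈ Finset.range J := by
              rw [Finset.mem_range]; omega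
            refine le_trans (le_of_eq ?_) (Finset.single_le_sum
              (f := fun j => (E j).indicator (fun _ => ENNReal.ofReal (2 / 2 ^ j)) x)
              (fun _ _ => zero_le) hm)
            have hxE : x ∈ E ((φ (p x)).1 : ℕ) := rfl
            simp only [Set.indicator_of_mem hxE]
      _ = ENNReal.ofReal (2 / 2 ^ J) + ∑ j ∈ Finset.range J,
            ENNReal.ofReal (2 / 2 ^ j) * μ (E j) := by
          rw [lintegral_add_left measurable_const, lintegral_finsetSum]
          · simp [lintegral_indicator_const (hEm _)]
          · intro j _
            exact measurable_const.indicator (hEm j)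
      _ ≤ ENNReal.ofReal (2 / 2 ^ J) + ∑ j ∈ Finset.range J, ENNReal.ofReal (8 * L * δ) := by
          gcongr with j hj
          exact hE j hj
      _ = ENNReal.ofReal (2 / 2 ^ J + J * (8 * L * δ)) := by
          rw [Finset.sum_const, Finset.card_range, nsmul_eq_mul,
            ENNReal.ofReal_add (by positivity) (by positivity),
            ENNReal.ofReal_mul (p := (J : ℝ)) (by positivity), ENNReal.ofReal_natCast]
      _ ≤ ENNReal.ofReal ε := ENNReal.ofReal_le_ofReal hJ
  · calc (G.image br).card ≤ G.card := Finset.card_image_le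
      _ ≤ Fintype.card (A → DyIdx J) := Finset.card_le_univ _
      _ = _ := by rw [Fintype.card_fun, Fintype.card_coe]

/-- Theorem: bracketing entropy of the weak-average-Hölder class. -/
theorem bracketing_entropy_weak_holder
    {Ω : Type*} [MetricSpace Ω] [MeasurableSpace Ω] [BorelSpace Ω]
    (μ : Measure Ω) [IsProbabilityMeasure μ]
    (β L ε : ℝ) (hβ0 : 0 < β) (hβ1 : β ≤ 1) (hL : 0 < L)
    (hε0 : 0 < ε) (hεL : ε < L) (hε4 : ε < 1 / 4) :
    elog (bracketingNumber (weakHolderClass μ β L) μ ε) ≤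
      coveringNumber Ω ((ε / (128 * L * Real.logb 2 (1 / ε))) ^ (1 / β)) *
        ENNReal.ofReal (Real.log (16 * Real.logb 2 (1 / ε) / ε)) := by
  set K : ℝ := Real.logb 2 (1 / ε) with hK
  have hpow : (2:ℝ) ^ K = 1 / ε := Real.rpow_logb (by norm_num) (by norm_num) (by positivity)
  have hK2 : 2 ≤ K := by
    rw [hK, Real.le_logb_iff_rpow_le (by norm_num) (by positivity), le_div_iff₀ hε0]
    norm_num; linarith
  have hK0 : 0 < K := by linarith
  set J : ℕ := ⌈K + 2⌉₊ with hJdef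
  have hJ1 : K + 2 ≤ J := Nat.le_ceil _
  have hJ2 : (J : ℝ) < K + 3 := by
    have := Nat.ceil_lt_add_one (a := K + 2) (by linarith)
    linarith
  have hpJ1 : 4 / ε ≤ (2:ℝ) ^ J := by
    have h := Real.rpow_le_rpow_of_exponent_le (x := 2) (by norm_num) hJ1
    rw [Real.rpow_add (by norm_num), hpow, Real.rpow_natCast] at h
    norm_num at h
    rw [div_eq_mul_inv]; linarith
  have hpJ2 : (2:ℝ) ^ J ≤ 8 / ε := by
    have h := Real.rpow_le_rpow_of_exponent_le (x := 2) (by norm_num) hJ2.le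
    rw [Real.rpow_add (by norm_num), hpow, Real.rpow_natCast] at h
    norm_num at h
    rw [div_eq_mul_inv]; linarith
  set b : ℝ := ε / (128 * L * K) with hb
  have hb0 : 0 < b := by positivity
  have hcard : ((Fintype.card (DyIdx J) : ℕ) : ℝ) ≤ 16 * K / ε := by
    have h1 : ((Fintype.card (DyIdx J) : ℕ) : ℝ) + 1 = 2 ^ (J + 1) := by
      exact_mod_cast card_DyIdx J
    rw [pow_succ] at h1
    have h2 : 8 / ε * 2 ≤ 16 * K / ε := by
      rw [div_mul_eq_mul_div]
      gcongr
      linarith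
    linarith
  have hcard1 : 1 ≤ Fintype.card (DyIdx J) := by
    have h1 := card_DyIdx J
    have h2 : 2 ≤ 2 ^ (J + 1) := by
      rw [pow_succ]; have := Nat.one_le_two_pow (n := J); omega
    omega
  have hlog : Real.log (Fintype.card (DyIdx J)) ≤ Real.log (16 * K / ε) :=
    Real.log_le_log (by exact_mod_cast hcard1) hcard
  have hlogpos : 0 < Real.log (16 * K / ε) := by
    apply Real.log_pos
    rw [lt_div_iff₀ hε0]; linarith
  unfold _root_.coveringNumber
  rw [ENNReal.iInf_mul_of_ne (by simpa using hlogpos) ENNReal.ofReal_ne_top]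
  refine le_iInf fun A => ?_
  rw [ENNReal.iInf_mul_of_ne (by simpa using hlogpos) ENNReal.ofReal_ne_top]
  refine le_iInf fun hA => ?_
  have hbβ : 2 * (b ^ (1 / β)) ^ β = 2 * b := by
    rw [← Real.rpow_mul hb0.le, one_div_mul_cancel hβ0.ne', Real.rpow_one]
  obtain ⟨B, hB, hBc⟩ := exists_bracketing μ β L ε (b ^ (1 / β)) (2 * b) J hβ0 hβ1 hL hε0
    (by positivity) hbβ (by
      have h1 : 2 / (2:ℝ) ^ J ≤ ε / 2 := by
        rw [div_le_iff₀ (by positivity)]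
        rw [div_le_iff₀ hε0] at hpJ1
        linarith
      have h2 : (J : ℝ) * (8 * L * (2 * b)) ≤ ε / 2 := by
        have h3 : 8 * L * (2 * b) = ε / (8 * K) := by
          rw [hb]; field_simp; norm_num
        rw [h3, mul_div_assoc', div_le_iff₀ (by positivity)]
        nlinarith
      linarith) A hA
  have hle : bracketingNumber (weakHolderClass μ β L) μ ε
      ≤ ((Fintype.card (DyIdx J) ^ A.card : ℕ) : ℝ≥0∞) :=
    le_trans (iInf₂_le B hB) (by exact_mod_cast hBc)
  unfold elog
  refine le_trans (iInf₂_le (Fintype.card (DyIdx J) ^ A.card) hle) ?_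
  rw [Nat.cast_pow, Real.log_pow, ENNReal.ofReal_mul (by positivity), ENNReal.ofReal_natCast]
  gcongr


end
end

section
/- There is an absolute constant c > 0 with the following property. Let (Ω,ρ) be a metric space, β ∈ (0,1], L > 0, δ ∈ (0,1), and 0 < ε < min(L, 1/4), and let D be a distribution over Ω×[0,1], with marginal μ over Ω, realizable by H̃öl^β_L(Ω,μ). If n ≥ c·( N_Ω((ε/(256·L·log₂(1/ε)))^{1/β}) + log(1/δ) ) / ε, then with probability at least 1−δ over drawing a sample S ∼ D^n, every f ∈ H̃öl^β_L(Ω,μ) satisfies L_D(f) ≤ 1.01·L_S(f) + ε. The same holds with H̃öl^β_L(Ω,μ) replaced by H̄öl^β_L(Ω,μ). -/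
open MeasureTheory Set Metric
open scoped ENNReal NNReal

noncomputable section

universe u


lemma conc_aux {α : Type*} [MeasurableSpace α] (D : Measure α) [IsProbabilityMeasure D]
    (n : ℕ) (hn : 0 < n) (ε : ℝ) (A : Set α) (hA : MeasurableSet A) :
    (Measure.pi fun _ : Fin n => D)
      {S | 1.01 * ((n:ℝ)⁻¹ * ∑ i, A.indicator (1 : α → ℝ) (S i)) + ε / 2 ≤ D.real A}
      ≤ ENNReal.ofReal (Real.exp (-(n * ε / 202))) := by
  set P := (Measure.pi fun _ : Fin n => D) with hP
  set a : ℝ := Real.exp (-(1/100)) with ha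
  set p : ℝ := D.real A with hp
  have hp0 : 0 ≤ p := measureReal_nonneg
  have hn' : (0:ℝ) < n := by exact_mod_cast hn
  have ha1 : a ≤ 1 / 1.01 := by
    rw [ha, Real.exp_neg, ← one_div]
    apply one_div_le_one_div_of_le (by norm_num)
    have := Real.add_one_le_exp (1/100 : ℝ)
    linarith
  set h : α → ℝ := fun x => 1 - (1 - a) * A.indicator (1 : α → ℝ) x with hh
  have hexp : ∀ x, h x = Real.exp (-(1/100) * A.indicator (1 : α → ℝ) x) := by
    intro x
    by_cases hx : x ∈ A <;> simp [hh, hx, ha]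
  have hindint : Integrable (A.indicator (1 : α → ℝ)) D := (integrable_const (1:ℝ)).indicator hA
  have hint : Integrable h D := (integrable_const 1).sub (hindint.const_mul _)
  have hval : ∫ x, h x ∂D = 1 - (1 - a) * p := by
    rw [hh, integral_sub (integrable_const 1) (hindint.const_mul _), integral_const_mul,
      integral_indicator_one hA]
    simp [hp]
  have hprod := integral_fintype_prod_eq_pow (ι := Fin n) h (μ := D)
  have hprodint : Integrable (fun S : Fin n → α => ∏ i, h (S i)) P :=
    Integrable.fintype_prod (f := fun _ => h) (fun _ => hint)
  set T : ℝ := n * (p - ε / 2) / 1.01 with hT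
  have hmk := mul_meas_ge_le_integral_of_nonneg (μ := P) (f := fun S : Fin n → α => ∏ i, h (S i))
    (Filter.Eventually.of_forall fun S => Finset.prod_nonneg fun i _ => by
      rw [hexp]; positivity) hprodint (Real.exp (-(1/100) * T))
  rw [hprod, hval, Fintype.card_fin] at hmk
  have hsub : {S : Fin n → α | 1.01 * ((n:ℝ)⁻¹ * ∑ i, A.indicator (1 : α → ℝ) (S i)) + ε / 2 ≤ p}
      ⊆ {S | Real.exp (-(1/100) * T) ≤ ∏ i, h (S i)} := by
    intro S hS
    simp only [mem_ofPred_eq] at hS ⊢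
    simp_rw [hexp]
    rw [← Real.exp_sum, ← Finset.mul_sum]
    apply Real.exp_le_exp.2
    have : ∑ i, A.indicator (1 : α → ℝ) (S i) ≤ T := by
      rw [hT, le_div_iff₀ (by norm_num)]
      have h2 := mul_le_mul_of_nonneg_left hS hn'.le
      have h3 : (n:ℝ) * (1.01 * ((n:ℝ)⁻¹ * ∑ i, A.indicator (1 : α → ℝ) (S i)) + ε / 2)
        = 1.01 * ∑ i, A.indicator (1 : α → ℝ) (S i) + n * (ε / 2) := by
        field_simp
      rw [h3] at h2
      linarith
    linarith
  have hpow : (1 - (1 - a) * p) ^ n ≤ Real.exp (-((1-a) * p) * n) := by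
    have h1 : 0 ≤ 1 - (1 - a) * p := by
      rw [← hval]
      apply integral_nonneg
      intro x
      change 0 ≤ h x
      rw [hexp]; positivity
    calc (1 - (1 - a) * p) ^ n ≤ (Real.exp (-((1-a) * p))) ^ n := by
          apply pow_le_pow_left₀ h1
          have := Real.add_one_le_exp (-((1-a) * p))
          linarith
      _ = _ := by rw [← Real.exp_nat_mul]; ring_nf
  have hfin : P.real {S | Real.exp (-(1/100) * T) ≤ ∏ i, h (S i)} ≤ Real.exp (-(n * ε / 202)) := by
    have h1 := hmk.trans hpow
    rw [mul_comm, ← le_div_iff₀ (Real.exp_pos _), ← Real.exp_sub] at h1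
    refine h1.trans (Real.exp_le_exp.2 ?_)
    have h2 : 0 ≤ (1 / 1.01 - a) * (p * n) := mul_nonneg (by linarith) (by positivity)
    rw [hT]
    have h3 : (n:ℝ) * (p - ε / 2) / 1.01 = (p * n) * (1/1.01) - n * ε * (1/2.02) := by
      ring
    rw [h3]
    nlinarith
  calc P _ ≤ P {S | Real.exp (-(1/100) * T) ≤ ∏ i, h (S i)} := measure_mono hsub
    _ = ENNReal.ofReal (P.real {S | Real.exp (-(1/100) * T) ≤ ∏ i, h (S i)}) := by
      rw [ofReal_measureReal]
    _ ≤ _ := ENNReal.ofReal_le_ofReal hfin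

lemma meas_aux {Ω : Type*} [MetricSpace Ω] [MeasurableSpace Ω] [BorelSpace Ω]
    (β : ℝ) (hβ : 0 < β) (f : Ω → ℝ) (hf : Measurable f) (M : ℝ) (hM : ∀ x, f x ≤ M) (t : ℝ)
    (ht : 0 ≤ t) : MeasurableSet {x | ∃ y, t * dist x y ^ β < f y - f x} := by
  have hb : ∀ x, BddAbove (range fun y => f y - t * dist x y ^ β) := by
    intro x
    refine ⟨M, ?_⟩
    rintro _ ⟨y, rfl⟩
    have : 0 ≤ t * dist x y ^ β := by positivity
    have := hM y
    simp only
    linarith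
  have hm : Measurable fun x => ⨆ y, (f y - t * dist x y ^ β) := by
    apply LowerSemicontinuous.measurable
    apply lowerSemicontinuous_ciSup hb
    intro y
    apply Continuous.lowerSemicontinuous
    have : Continuous fun x => dist x y ^ β :=
      (continuous_id.dist continuous_const).rpow_const (fun _ => Or.inr hβ.le)
    fun_prop
  have : {x | ∃ y, t * dist x y ^ β < f y - f x} = {x | f x < ⨆ y, (f y - t * dist x y ^ β)} := by
    ext x
    have : Nonempty Ω := ⟨x⟩
    simp only [mem_ofPred_eq]
    rw [lt_ciSup_iff (hb x)]
    constructor <;> rintro ⟨y, hy⟩ <;> exact ⟨y, by linarith⟩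
  rw [this]
  exact measurableSet_lt hf hm

lemma hslope_meas {Ω : Type*} [MetricSpace Ω] [MeasurableSpace Ω] [BorelSpace Ω]
    (β : ℝ) (hβ : 0 < β) (f : Ω → ℝ) (hf : Measurable f) (h01 : ∀ x, f x ∈ Icc (0:ℝ) 1) :
    Measurable (hslope β f) := by
  apply measurable_of_Ioi
  intro a
  by_cases ha : a = ⊤
  · subst ha; simp
  lift a to ℝ≥0 using ha
  have : hslope β f ⁻¹' Ioi (a : ℝ≥0∞) = {x | ∃ y, (a:ℝ) * dist x y ^ β < f y - f x} ∪
      {x | ∃ y, (a:ℝ) * dist x y ^ β < (-f y) - (-f x)} := by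
    ext x
    simp only [mem_preimage, mem_Ioi, hslope, lt_iSup_iff, mem_union, mem_ofPred_eq]
    rw [← exists_or]
    apply exists_congr
    intro y
    by_cases hxy : y = x
    · subst hxy
      simp [Real.zero_rpow hβ.ne']
    · have hd : 0 < dist x y ^ β := Real.rpow_pos_of_pos (dist_pos.2 (Ne.symm hxy)) _
      simp only [ne_eq, hxy, not_false_eq_true, exists_true_left]
      rw [← ENNReal.ofReal_coe_nnreal,
        ENNReal.ofReal_lt_ofReal_iff_of_nonneg a.coe_nonneg, lt_div_iff₀ hd, lt_abs]
      constructor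
      · rintro (h | h)
        · right; linarith
        · left; linarith
      · rintro (h | h)
        · right; linarith
        · left; linarith
  rw [this]
  exact (meas_aux β hβ f hf 1 (fun x => (h01 x).2) a a.2).union
    (meas_aux β hβ (fun x => - f x) hf.neg 0 (fun x => by have := (h01 x).1; linarith) a a.2)

lemma avg_sub_weak {Ω : Type*} [MetricSpace Ω] [MeasurableSpace Ω] [BorelSpace Ω]
    (μ : Measure Ω) (β L : ℝ) (hβ : 0 < β) : avgHolderClass μ β L ⊆ weakHolderClass μ β L := by
  rintro f ⟨h1, h2, h3⟩
  refine ⟨h1, h2, ?_⟩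
  refine iSup₂_le fun t _ => ?_
  exact (mul_meas_ge_le_lintegral (hslope_meas β hβ f h1 h2) _).trans h3

lemma weak_bound {Ω : Type*} [MetricSpace Ω] [MeasurableSpace Ω]
    (μ : Measure Ω) (β L : ℝ) (f : Ω → ℝ)
    (hf : f ∈ weakHolderClass μ β L) (t : ℝ) (ht : 0 < t) :
    ENNReal.ofReal t * μ {x | ENNReal.ofReal t ≤ hslope β f x} ≤ ENNReal.ofReal L :=
  (le_iSup₂ (f := fun (t : ℝ) (_ : 0 < t) =>
    ENNReal.ofReal t * μ {x | ENNReal.ofReal t ≤ hslope β f x}) t ht).trans hf.2.2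

lemma dyadic_aux (v : ℝ) (hv1 : v ≤ 1) (K : ℕ) :
    v ≤ (1/2:ℝ) ^ K + ∑ k ∈ Finset.range K, if (1/2:ℝ)^(k+1) ≤ v then (1/2:ℝ)^(k+1) else 0 := by
  induction K with
  | zero => simpa using hv1
  | succ K ih =>
    rw [Finset.sum_range_succ]
    by_cases h : (1/2:ℝ)^(K+1) ≤ v
    · rw [if_pos h]
      have : (1/2:ℝ)^K = (1/2:ℝ)^(K+1) + (1/2:ℝ)^(K+1) := by rw [pow_succ]; ring
      linarith
    · have : 0 ≤ ∑ k ∈ Finset.range K, if (1/2:ℝ)^(k+1) ≤ v then (1/2:ℝ)^(k+1) else 0 :=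
        Finset.sum_nonneg fun k _ => by split_ifs <;> positivity
      rw [if_neg h]
      push Not at h
      linarith

/-- dyadic majorant of the local oscillation -/
def oscU {Ω : Type*} [MetricSpace Ω] (β κ : ℝ) (K : ℕ) (f : Ω → ℝ) (x : Ω) : ℝ≥0∞ :=
  ENNReal.ofReal ((1/2:ℝ)^K) + ∑ k ∈ Finset.range K,
    {x | ENNReal.ofReal ((1/2:ℝ)^(k+1) / κ) ≤ hslope β f x}.indicator
      (fun _ => ENNReal.ofReal ((1/2:ℝ)^(k+1))) x

lemma oscU_meas {Ω : Type*} [MetricSpace Ω] [MeasurableSpace Ω] [BorelSpace Ω]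
    (β κ : ℝ) (hβ : 0 < β) (K : ℕ) (f : Ω → ℝ) (hf : Measurable f)
    (h01 : ∀ x, f x ∈ Icc (0:ℝ) 1) : Measurable (oscU β κ K f) := by
  unfold oscU
  apply Measurable.const_add
  refine Finset.measurable_sum _ fun k _ => ?_
  exact measurable_const.indicator (measurableSet_le measurable_const (hslope_meas β hβ f hf h01))

lemma oscU_int {Ω : Type*} [MetricSpace Ω] [MeasurableSpace Ω] [BorelSpace Ω]
    (μ : Measure Ω) [IsProbabilityMeasure μ]
    (β κ L : ℝ) (hβ : 0 < β) (hκ : 0 < κ) (hL : 0 < L) (K : ℕ) (f : Ω → ℝ)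
    (hf : f ∈ weakHolderClass μ β L) :
    ∫⁻ x, oscU β κ K f x ∂μ ≤ ENNReal.ofReal ((1/2:ℝ)^K + K * (κ * L)) := by
  have hms : ∀ t : ℝ≥0∞, MeasurableSet {x | t ≤ hslope β f x} := fun t =>
    measurableSet_le measurable_const (hslope_meas β hβ f hf.1 hf.2.1)
  unfold oscU
  rw [lintegral_add_left measurable_const, lintegral_finsetSum _
    (fun k _ => measurable_const.indicator (hms _))]
  simp_rw [lintegral_indicator_const (hms _)]
  rw [ENNReal.ofReal_add (by positivity) (by positivity)]
  simp only [lintegral_const, measure_univ, mul_one]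
  gcongr
  have : ∀ k ∈ Finset.range K, ENNReal.ofReal ((1/2:ℝ)^(k+1)) *
      μ {x | ENNReal.ofReal ((1/2:ℝ)^(k+1) / κ) ≤ hslope β f x} ≤ ENNReal.ofReal (κ * L) := by
    intro k _
    have h1 := weak_bound μ β L f hf ((1/2:ℝ)^(k+1) / κ) (by positivity)
    have h2 : ENNReal.ofReal ((1/2:ℝ)^(k+1)) =
        ENNReal.ofReal κ * ENNReal.ofReal ((1/2:ℝ)^(k+1) / κ) := by
      rw [← ENNReal.ofReal_mul hκ.le]
      congr 1
      field_simp
    rw [h2, mul_assoc, ENNReal.ofReal_mul hκ.le]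
    gcongr
  refine (Finset.sum_le_sum this).trans ?_
  rw [Finset.sum_const, Finset.card_range, nsmul_eq_mul,
    ENNReal.ofReal_mul (p := (K:ℝ)) (by positivity), ENNReal.ofReal_natCast]

lemma oscU_bound {Ω : Type*} [MetricSpace Ω]
    (β κ : ℝ) (hβ : 0 < β) (hκ : 0 < κ) (K : ℕ) (f : Ω → ℝ)
    (h01 : ∀ x, f x ∈ Icc (0:ℝ) 1) (x y : Ω) (hxy : dist x y ^ β ≤ κ) :
    ENNReal.ofReal |f x - f y| ≤ oscU β κ K f x := by
  have hv1 : |f x - f y| ≤ 1 := by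
    have := h01 x
    have := h01 y
    simp only [mem_Icc] at *
    rw [abs_le]; constructor <;> linarith
  refine (ENNReal.ofReal_le_ofReal (dyadic_aux _ hv1 K)).trans ?_
  rw [ENNReal.ofReal_add (by positivity)
    (Finset.sum_nonneg fun k _ => by split_ifs <;> positivity), oscU,
    ENNReal.ofReal_sum_of_nonneg (fun k _ => by split_ifs <;> positivity)]
  gcongr with k hk
  split_ifs with h
  · have hx : x ∈ {x | ENNReal.ofReal ((1/2:ℝ)^(k+1) / κ) ≤ hslope β f x} := by
      have hne : y ≠ x := by
        rintro rfl
        have : (0:ℝ) < (1/2:ℝ)^(k+1) := by positivity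
        rw [sub_self, abs_zero] at h
        linarith
      have hd : 0 < dist x y ^ β := Real.rpow_pos_of_pos (dist_pos.2 hne.symm) _
      refine le_trans ?_ (le_iSup₂ (f := fun (y : Ω) (_ : y ≠ x) =>
        ENNReal.ofReal (|f x - f y| / dist x y ^ β)) y hne)
      apply ENNReal.ofReal_le_ofReal
      gcongr
    rw [indicator_of_mem hx]
  · simp

lemma cells_aux {Ω : Type*} [MetricSpace Ω] [MeasurableSpace Ω] [BorelSpace Ω] (r : ℝ) (m : ℕ)
    (h : coveringNumber Ω r ≤ (m : ℝ≥0∞)) :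
    ∃ k ≤ m, ∃ π : Ω → ℕ, Measurable π ∧ (∀ x, π x < k) ∧
      ∀ x y, π x = π y → dist x y ≤ 2 * r := by
  classical
  have h1 : coveringNumber Ω r < ((m + 1 : ℕ) : ℝ≥0∞) :=
    h.trans_lt (by exact_mod_cast Nat.lt_succ_self m)
  unfold _root_.coveringNumber at h1
  simp only [iInf_lt_iff] at h1
  obtain ⟨A, hA, hAm⟩ := h1
  have hAm' : A.card < m + 1 := by exact_mod_cast hAm
  have hp : ∀ x : Ω, ∃ N : ℕ, ∃ hN : N < A.card, dist x (A.equivFin.symm ⟨N, hN⟩ : Ω) ≤ r := by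
    intro x
    obtain ⟨a, ha, hd⟩ := hA x
    refine ⟨A.equivFin ⟨a, ha⟩, (A.equivFin ⟨a, ha⟩).2, ?_⟩
    simpa using hd
  refine ⟨A.card, by omega, fun x => Nat.find (hp x), ?_, ?_, ?_⟩
  · apply measurable_find
    intro j
    by_cases hj : j < A.card
    · simp only [hj, exists_true_left]
      exact measurableSet_le (continuous_id.dist continuous_const).measurable measurable_const
    · simp [hj]
  · intro x
    exact (Nat.find_spec (hp x)).1
  · intro x y hxy
    obtain ⟨h1, h2⟩ := Nat.find_spec (hp x)
    obtain ⟨h3, h4⟩ := Nat.find_spec (hp y)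
    have hxy' : Nat.find (hp x) = Nat.find (hp y) := hxy
    have e : (⟨Nat.find (hp x), h1⟩ : Fin A.card) = ⟨Nat.find (hp y), h3⟩ := Fin.ext hxy'
    rw [e] at h2
    have := dist_triangle_right x y (A.equivFin.symm ⟨Nat.find (hp y), h3⟩ : Ω)
    linarith

lemma det_aux {α : Type*} [MeasurableSpace α] (D : Measure α) [IsProbabilityMeasure D]
    (n : ℕ) (k : ℕ) (η : ℝ) (π : α → ℕ) (hπ : Measurable π)
    (hk : ∀ x, π x < k) (w : ℕ → ℝ) (hw0 : ∀ j, 0 ≤ w j) (hw1 : ∀ j, w j ≤ 1)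
    (S : Fin n → α)
    (hgood : ∀ A ∈ (Finset.range k).powerset, D.real {p | π p ∈ A} <
      1.01 * ((n:ℝ)⁻¹ * ∑ i, {p | π p ∈ A}.indicator (1 : α → ℝ) (S i)) + η) :
    ∑ j ∈ Finset.range k, w j * D.real {p | π p = j} ≤
      1.01 * ((n:ℝ)⁻¹ * ∑ i, w (π (S i))) + η := by
  classical
  set q : ℕ → ℝ := fun j => (n:ℝ)⁻¹ * ∑ i, if π (S i) = j then 1 else 0 with hq
  set p : ℕ → ℝ := fun j => D.real {p | π p = j} with hp
  set A := (Finset.range k).filter (fun j => 1.01 * q j < p j) with hA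
  have hg := hgood A (Finset.mem_powerset.2 (Finset.filter_subset _ _))
  have e1 : D.real {x | π x ∈ A} = ∑ j ∈ A, p j := by
    have : {x | π x ∈ A} = ⋃ j ∈ A, {x | π x = j} := by ext x; simp
    rw [this, measureReal_biUnion_finset]
    · intro i _ j _ hij
      refine Set.disjoint_left.2 ?_
      intro x hx hx'
      exact hij (hx.symm.trans hx')
    · intro j _
      exact hπ (measurableSet_singleton j)
  have e2 : (n:ℝ)⁻¹ * ∑ i, {x | π x ∈ A}.indicator (1 : α → ℝ) (S i) = ∑ j ∈ A, q j := by
    rw [hq, ← Finset.mul_sum, Finset.sum_comm]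
    congr 1
    refine Finset.sum_congr rfl fun i _ => ?_
    rw [Finset.sum_ite_eq]
    simp [Set.indicator_apply]
  have e3 : (n:ℝ)⁻¹ * ∑ i, w (π (S i)) = ∑ j ∈ Finset.range k, w j * q j := by
    have : ∀ j, w j * q j = (n:ℝ)⁻¹ * ∑ i, if π (S i) = j then w j else 0 := by
      intro j
      simp only [hq, Finset.mul_sum]
      refine Finset.sum_congr rfl fun i _ => ?_
      split_ifs <;> ring
    simp_rw [this]
    rw [← Finset.mul_sum, Finset.sum_comm]
    congr 1
    refine Finset.sum_congr rfl fun i _ => ?_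
    rw [Finset.sum_ite_eq, if_pos (Finset.mem_range.2 (hk _))]
  have e4 : ∑ j ∈ Finset.range k, w j * (p j - 1.01 * q j) ≤ ∑ j ∈ A, (p j - 1.01 * q j) := by
    rw [hA, Finset.sum_filter]
    refine Finset.sum_le_sum fun j _ => ?_
    split_ifs with h
    · have := hw1 j
      nlinarith
    · have := hw0 j
      push Not at h
      nlinarith
  rw [e1, e2] at hg
  rw [e3]
  rw [Finset.sum_sub_distrib, ← Finset.mul_sum] at e4
  have e5 : ∑ j ∈ Finset.range k, w j * (p j - 1.01 * q j) =
      ∑ j ∈ Finset.range k, w j * p j - 1.01 * ∑ j ∈ Finset.range k, w j * q j := by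
    rw [Finset.mul_sum, ← Finset.sum_sub_distrib]
    refine Finset.sum_congr rfl fun j _ => by ring
  linarith

lemma lint_aux {Ω : Type*} [MeasurableSpace Ω] (μ : Measure Ω) [IsProbabilityMeasure μ]
    (k : ℕ) (π : Ω → ℕ) (hπ : Measurable π)
    (hk : ∀ x, π x < k) (w : ℕ → ℝ) (hw0 : ∀ j, 0 ≤ w j) :
    ∫⁻ x, ENNReal.ofReal (w (π x)) ∂μ =
      ENNReal.ofReal (∑ j ∈ Finset.range k, w j * μ.real {x | π x = j}) := by
  have hm : ∀ j, MeasurableSet {x | π x = j} := fun j => hπ (measurableSet_singleton j)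
  have e : ∀ x, ENNReal.ofReal (w (π x)) = ∑ j ∈ Finset.range k,
      {x | π x = j}.indicator (fun _ => ENNReal.ofReal (w j)) x := by
    intro x
    simp only [Set.indicator_apply, mem_ofPred_eq]
    rw [Finset.sum_ite_eq, if_pos (Finset.mem_range.2 (hk _))]
  simp_rw [e]
  rw [lintegral_finsetSum _ (fun j _ => measurable_const.indicator (hm j)),
    ENNReal.ofReal_sum_of_nonneg (fun j _ => mul_nonneg (hw0 j) measureReal_nonneg)]
  refine Finset.sum_congr rfl fun j _ => ?_
  rw [lintegral_indicator_const (hm j), ENNReal.ofReal_mul (hw0 j), ofReal_measureReal]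

lemma num_aux (ε L : ℝ) (hε : 0 < ε) (hL : 0 < L) (hε4 : ε < 1/4) :
    ∃ K : ℕ, 2 * ((1/2:ℝ)^K + K * ((2 * (ε / (256 * L * Real.logb 2 (1 / ε)))) * L)) ≤ ε / 2 := by
  set l := Real.logb 2 (1 / ε) with hl
  have hl2 : 2 ≤ l := by
    rw [hl, Real.le_logb_iff_rpow_le (by norm_num) (by positivity), le_div_iff₀ hε]
    norm_num
    linarith
  have h2l : (2:ℝ) ^ l = 1 / ε := Real.rpow_logb (by norm_num) (by norm_num) (by positivity)
  refine ⟨⌈l⌉₊ + 3, ?_⟩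
  have hc : (⌈l⌉₊ : ℝ) < l + 1 := Nat.ceil_lt_add_one (by linarith)
  have hc2 : (1/2:ℝ)^⌈l⌉₊ ≤ ε := by
    have : 1 / ε ≤ (2:ℝ)^⌈l⌉₊ := by
      rw [← h2l, ← Real.rpow_natCast]
      exact Real.rpow_le_rpow_of_exponent_le (by norm_num) (Nat.le_ceil l)
    rw [one_div, inv_pow]
    calc ((2:ℝ)^⌈l⌉₊)⁻¹ ≤ (1/ε)⁻¹ := inv_anti₀ (by positivity) this
      _ = ε := by simp
  have e : ((⌈l⌉₊ + 3 : ℕ) : ℝ) * ((2 * (ε / (256 * L * l))) * L) ≤ 3 * ε / 128 := by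
    have : (2 * (ε / (256 * L * l))) * L = ε / (128 * l) := by
      field_simp
      ring
    rw [this]
    push_cast
    rw [mul_div_assoc', div_le_div_iff₀ (by positivity) (by norm_num)]
    nlinarith
  rw [pow_add]
  linarith

lemma main_weak {Ω : Type*} [MetricSpace Ω] [MeasurableSpace Ω] [BorelSpace Ω]
    (β L δ ε : ℝ) (hβ : 0 < β) (hβ1 : β ≤ 1) (hL : 0 < L) (hδ : 0 < δ) (hδ1 : δ < 1)
    (hε : 0 < ε) (hε4 : ε < 1 / 4) (D : Measure (Ω × ℝ)) [IsProbabilityMeasure D]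
    (μ : Measure Ω) (hμ : D.map Prod.fst = μ) (n m : ℕ)
    (hcov : coveringNumber Ω ((ε / (256 * L * Real.logb 2 (1 / ε))) ^ (1 / β)) ≤ (m : ℝ≥0∞))
    (hn : (n : ℝ) ≥ 1000 * ((m : ℝ) + Real.log (1 / δ)) / ε)
    (hreal : Realizable D (weakHolderClass μ β L)) :
    ENNReal.ofReal (1 - δ) ≤ (Measure.pi fun _ : Fin n => D)
      {S | ∀ f ∈ weakHolderClass μ β L,
        risk D f ≤ ENNReal.ofReal (1.01 * empRisk S f + ε)} := by
  classical
  obtain ⟨g, hg, hgD⟩ := hreal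
  have hprob : IsProbabilityMeasure μ := by
    rw [← hμ]; exact Measure.isProbabilityMeasure_map measurable_fst.aemeasurable
  have hlog : 0 < Real.log (1 / δ) := Real.log_pos (by rw [lt_div_iff₀ hδ]; linarith)
  have hn0 : (0:ℝ) < n := lt_of_lt_of_le (by positivity) hn
  have hl0 : 0 < Real.logb 2 (1 / ε) := by
    apply Real.logb_pos (by norm_num)
    rw [lt_div_iff₀ hε]; linarith
  set b := ε / (256 * L * Real.logb 2 (1 / ε)) with hb
  have hb0 : 0 < b := by positivity
  obtain ⟨K, hK⟩ := num_aux ε L hε hL hε4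
  rw [← hb] at hK
  obtain ⟨k, hkm, π, hπm, hπk, hπd⟩ := cells_aux _ m hcov
  have hκ : ∀ x y, π x = π y → dist x y ^ β ≤ 2 * b := by
    intro x y hxy
    calc dist x y ^ β ≤ (2 * b ^ (1/β)) ^ β :=
          Real.rpow_le_rpow dist_nonneg (hπd x y hxy) hβ.le
      _ = 2 ^ β * b := by
          rw [Real.mul_rpow (by norm_num) (by positivity), ← Real.rpow_mul hb0.le,
            one_div_mul_cancel hβ.ne', Real.rpow_one]
      _ ≤ 2 * b := by
          gcongr
          calc (2:ℝ)^β ≤ 2 ^ (1:ℝ) := Real.rpow_le_rpow_of_exponent_le (by norm_num) hβ1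
            _ = 2 := Real.rpow_one _
  have hlab : ∀ᵐ p ∂D, g p.1 = p.2 := by
    have hmeas : Measurable fun p : Ω × ℝ => ENNReal.ofReal |g p.1 - p.2| := by
      have : Measurable fun p : Ω × ℝ => g p.1 := hg.1.comp measurable_fst
      exact ((this.sub measurable_snd).abs).ennreal_ofReal
    have := (lintegral_eq_zero_iff hmeas).1 hgD
    filter_upwards [this] with p hp
    simp only [Pi.zero_apply, ENNReal.ofReal_eq_zero, abs_nonpos_iff] at hp
    linarith
  set P := (Measure.pi fun _ : Fin n => D) with hP
  have hlabS : ∀ᵐ S ∂P, ∀ i, g (S i).1 = (S i).2 :=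
    Filter.eventually_all.2 fun i =>
      (Measure.tendsto_eval_ae_ae (μ := fun _ : Fin n => D) (i := i)).eventually hlab
  set B : Finset ℕ → Set (Ω × ℝ) := fun A => {p | π p.1 ∈ A} with hB
  set bad : Finset ℕ → Set (Fin n → Ω × ℝ) := fun A =>
    {S | 1.01 * ((n:ℝ)⁻¹ * ∑ i, (B A).indicator (1 : Ω × ℝ → ℝ) (S i)) + ε / 2 ≤ D.real (B A)}
    with hbad
  have hπ' : Measurable fun p : Ω × ℝ => π p.1 := hπm.comp measurable_fst
  have hbadP : P (⋃ A ∈ (Finset.range k).powerset, bad A) ≤ ENNReal.ofReal δ := by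
    refine (measure_biUnion_finset_le _ _).trans ?_
    refine (Finset.sum_le_sum (g := fun _ => ENNReal.ofReal (Real.exp (-(n * ε / 202))))
      fun A _ => conc_aux D n (by exact_mod_cast hn0) ε (B A)
        (hπ' (Set.to_countable _ |>.measurableSet : MeasurableSet (A : Set ℕ)))).trans ?_
    rw [Finset.sum_const, Finset.card_powerset, Finset.card_range, nsmul_eq_mul,
      ← ENNReal.ofReal_natCast, ← ENNReal.ofReal_mul (by positivity)]
    apply ENNReal.ofReal_le_ofReal
    push_cast
    have h2 : (2:ℝ)^k ≤ Real.exp m := by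
      calc (2:ℝ)^k ≤ (Real.exp 1)^k := by
            apply pow_le_pow_left₀ (by norm_num)
            have := Real.add_one_le_exp (1:ℝ)
            linarith
        _ = Real.exp k := by rw [← Real.exp_nat_mul]; simp
        _ ≤ _ := Real.exp_le_exp.2 (by exact_mod_cast hkm)
    calc (2:ℝ)^k * Real.exp (-(n * ε / 202)) ≤ Real.exp m * Real.exp (-(n * ε / 202)) := by gcongr
      _ = Real.exp (m + -(n * ε / 202)) := (Real.exp_add _ _).symm
      _ ≤ Real.exp (Real.log δ) := by
          apply Real.exp_le_exp.2
          have h3 : 1000 * ((m : ℝ) + Real.log (1 / δ)) ≤ n * ε := by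
            rwa [ge_iff_le, div_le_iff₀ hε] at hn
          have h4 : Real.log (1/δ) = - Real.log δ := by rw [one_div, Real.log_inv]
          have h5 : (0:ℝ) ≤ m := by positivity
          rw [h4] at h3 hlog
          linarith
      _ = δ := Real.exp_log hδ
  set E := {S : Fin n → Ω × ℝ | ∀ f ∈ weakHolderClass μ β L,
        risk D f ≤ ENNReal.ofReal (1.01 * empRisk S f + ε)} with hE
  have key : ∀ S : Fin n → Ω × ℝ, (∀ i, g (S i).1 = (S i).2) →
      S ∉ (⋃ A ∈ (Finset.range k).powerset, bad A) → S ∈ E := by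
    intro S hS hSb f hf
    have hgood : ∀ A ∈ (Finset.range k).powerset, D.real (B A) <
        1.01 * ((n:ℝ)⁻¹ * ∑ i, (B A).indicator (1 : Ω × ℝ → ℝ) (S i)) + ε / 2 := by
      intro A hA
      by_contra hcon
      push Not at hcon
      exact hSb (Set.mem_biUnion hA hcon)
    set h : Ω → ℝ := fun x => |f x - g x| with hh
    have hh0 : ∀ x, 0 ≤ h x := fun x => abs_nonneg _
    have hh1 : ∀ x, h x ≤ 1 := by
      intro x
      have h1 := hf.2.1 x
      have h2 := hg.2.1 x
      simp only [mem_Icc] at h1 h2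
      rw [hh, abs_le]; constructor <;> linarith
    set w : ℕ → ℝ := fun j => ⨅ x : {x // π x = j}, h x with hw
    have hwle : ∀ x, w (π x) ≤ h x := fun x =>
      ciInf_le (f := fun y : {y // π y = π x} => h y)
        ⟨0, by rintro _ ⟨y, rfl⟩; exact hh0 _⟩ ⟨x, rfl⟩
    have hw0 : ∀ j, 0 ≤ w j := fun j => Real.iInf_nonneg fun x => hh0 _
    have hw1 : ∀ j, w j ≤ 1 := by
      intro j
      by_cases hj : ∃ x, π x = j
      · obtain ⟨x, rfl⟩ := hj
        exact (hwle x).trans (hh1 x)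
      · have : IsEmpty {x // π x = j} := ⟨fun x => hj ⟨x.1, x.2⟩⟩
        simp [hw, Real.iInf_of_isEmpty]
    have hrisk : risk D f = ∫⁻ x, ENNReal.ofReal (h x) ∂μ := by
      have hhm : Measurable fun x => ENNReal.ofReal (h x) := (hf.1.sub hg.1).abs.ennreal_ofReal
      rw [← hμ, lintegral_map hhm measurable_fst]
      unfold risk
      apply lintegral_congr_ae
      filter_upwards [hlab] with p hp
      rw [hh, ← hp]
    have hpt : ∀ x, ENNReal.ofReal (h x) ≤ ENNReal.ofReal (w (π x)) +
        (oscU β (2*b) K f x + oscU β (2*b) K g x) := by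
      intro x
      by_cases htop : oscU β (2*b) K f x + oscU β (2*b) K g x = ⊤
      · rw [htop]; simp
      set V := (oscU β (2*b) K f x + oscU β (2*b) K g x).toReal with hV
      have hV0 : 0 ≤ V := ENNReal.toReal_nonneg
      rw [← ENNReal.ofReal_toReal htop, ← ENNReal.ofReal_add (hw0 _) hV0]
      apply ENNReal.ofReal_le_ofReal
      have : h x - V ≤ w (π x) := by
        have : Nonempty {y // π y = π x} := ⟨⟨x, rfl⟩⟩
        refine le_ciInf ?_
        rintro ⟨y, hy⟩
        have hd := hκ x y hy.symm
        have h1 : ENNReal.ofReal (|f x - f y| + |g x - g y|) ≤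
            oscU β (2*b) K f x + oscU β (2*b) K g x := by
          rw [ENNReal.ofReal_add (abs_nonneg _) (abs_nonneg _)]
          exact add_le_add (oscU_bound β _ hβ (by positivity) K f hf.2.1 x y hd)
            (oscU_bound β _ hβ (by positivity) K g hg.2.1 x y hd)
        have h2 := (ENNReal.ofReal_le_iff_le_toReal htop).1 h1
        have h3 : h x ≤ h y + (|f x - f y| + |g x - g y|) := by
          have e : f x - g x = (f y - g y) + ((f x - f y) + (g y - g x)) := by ring
          simp only [hh]
          rw [e, abs_sub_comm (g x) (g y)]
          exact (abs_add_le _ _).trans (by gcongr; exact abs_add_le _ _)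
        simp only
        linarith
      linarith
    have hdet := det_aux D n k (ε/2) (fun p : Ω × ℝ => π p.1) hπ' (fun p => hπk p.1) w hw0 hw1 S
      hgood
    have hemp : (n:ℝ)⁻¹ * ∑ i, w (π (S i).1) ≤ empRisk S f := by
      unfold empRisk
      gcongr with i
      rw [← hS i]
      exact hwle _
    have hsum : ∑ j ∈ Finset.range k, w j * μ.real {x | π x = j} =
        ∑ j ∈ Finset.range k, w j * D.real {p : Ω × ℝ | π p.1 = j} := by
      refine Finset.sum_congr rfl fun j _ => ?_
      congr 1
      have hmj : MeasurableSet {x | π x = j} := hπm (measurableSet_singleton j)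
      rw [← hμ, map_measureReal_apply measurable_fst hmj]
      rfl
    have hmw : Measurable fun x => ENNReal.ofReal (w (π x)) :=
      ((measurable_of_countable w).comp hπm).ennreal_ofReal
    have hu0 : (0:ℝ) ≤ (1/2:ℝ)^K + K * (2 * b * L) := by positivity
    have hs0 : 0 ≤ ∑ j ∈ Finset.range k, w j * μ.real {x | π x = j} :=
      Finset.sum_nonneg fun j _ => mul_nonneg (hw0 j) measureReal_nonneg
    calc risk D f ≤ ∫⁻ x, ENNReal.ofReal (w (π x)) +
          (oscU β (2*b) K f x + oscU β (2*b) K g x) ∂μ := by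
          rw [hrisk]; exact lintegral_mono hpt
      _ = ∫⁻ x, ENNReal.ofReal (w (π x)) ∂μ +
          (∫⁻ x, oscU β (2*b) K f x ∂μ + ∫⁻ x, oscU β (2*b) K g x ∂μ) := by
          rw [lintegral_add_left hmw, lintegral_add_left (oscU_meas β _ hβ K f hf.1 hf.2.1)]
      _ ≤ ENNReal.ofReal (∑ j ∈ Finset.range k, w j * μ.real {x | π x = j}) +
          (ENNReal.ofReal ((1/2:ℝ)^K + K * (2 * b * L)) +
            ENNReal.ofReal ((1/2:ℝ)^K + K * (2 * b * L))) := by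
          rw [lint_aux μ k π hπm hπk w hw0]
          gcongr
          · exact oscU_int μ β _ L hβ (by positivity) hL K f hf
          · exact oscU_int μ β _ L hβ (by positivity) hL K g hg
      _ ≤ _ := by
          rw [← ENNReal.ofReal_add hu0 hu0, ← ENNReal.ofReal_add hs0 (by positivity)]
          apply ENNReal.ofReal_le_ofReal
          rw [hsum]
          linarith
  have hPprob : IsProbabilityMeasure P := by rw [hP]; infer_instance
  have hcover : (1:ℝ≥0∞) ≤ P E + ENNReal.ofReal δ := by
    have hnull : P {S | ¬ ∀ i, g (S i).1 = (S i).2} = 0 := hlabS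
    calc (1:ℝ≥0∞) = P univ := measure_univ.symm
      _ ≤ P (E ∪ (⋃ A ∈ (Finset.range k).powerset, bad A) ∪
            {S | ¬ ∀ i, g (S i).1 = (S i).2}) := by
          apply measure_mono
          intro S _
          by_cases h1 : ∀ i, g (S i).1 = (S i).2
          · by_cases h2 : S ∈ (⋃ A ∈ (Finset.range k).powerset, bad A)
            · exact Or.inl (Or.inr h2)
            · exact Or.inl (Or.inl (key S h1 h2))
          · exact Or.inr h1
      _ ≤ P E + P (⋃ A ∈ (Finset.range k).powerset, bad A) +
            P {S | ¬ ∀ i, g (S i).1 = (S i).2} :=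
          (measure_union_le _ _).trans (by gcongr; exact measure_union_le _ _)
      _ ≤ _ := by rw [hnull, add_zero]; gcongr
  rw [ENNReal.ofReal_sub _ hδ.le, ENNReal.ofReal_one]
  exact tsub_le_iff_right.2 hcover

/-- Theorem: sample complexity of uniform convergence for
average-Hölder classes. -/
theorem uniform_convergence_avg_holder :
    ∃ c : ℝ, 0 < c ∧
      ∀ (Ω : Type u) [MetricSpace Ω] [MeasurableSpace Ω] [BorelSpace Ω]
        (β L δ ε : ℝ),
        0 < β → β ≤ 1 → 0 < L → 0 < δ → δ < 1 → 0 < ε → ε < L → ε < 1 / 4 →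
        ∀ (D : Measure (Ω × ℝ)) [IsProbabilityMeasure D],
          D {p | p.2 ∈ Icc (0:ℝ) 1} = 1 →
          ∀ μ : Measure Ω, D.map Prod.fst = μ →
          ∀ n m : ℕ,
            coveringNumber Ω ((ε / (256 * L * Real.logb 2 (1 / ε))) ^ (1 / β)) ≤ (m : ℝ≥0∞) →
            (n : ℝ) ≥ c * ((m : ℝ) + Real.log (1 / δ)) / ε →
            (Realizable D (weakHolderClass μ β L) →
              ENNReal.ofReal (1 - δ) ≤ (Measure.pi fun _ : Fin n => D)
                {S | ∀ f ∈ weakHolderClass μ β L,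
                  risk D f ≤ ENNReal.ofReal (1.01 * empRisk S f + ε)}) ∧
            (Realizable D (avgHolderClass μ β L) →
              ENNReal.ofReal (1 - δ) ≤ (Measure.pi fun _ : Fin n => D)
                {S | ∀ f ∈ avgHolderClass μ β L,
                  risk D f ≤ ENNReal.ofReal (1.01 * empRisk S f + ε)}) := by
  refine ⟨1000, by norm_num, ?_⟩
  intro Ω _ _ _ β L δ ε hβ hβ1 hL hδ hδ1 hε _ hε4 D _ _ μ hμ n m hcov hn
  have hsub := avg_sub_weak μ β L hβ
  refine ⟨main_weak β L δ ε hβ hβ1 hL hδ hδ1 hε hε4 D μ hμ n m hcov hn, ?_⟩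
  rintro ⟨g, hg, hgD⟩
  refine (main_weak β L δ ε hβ hβ1 hL hδ hδ1 hε hε4 D μ hμ n m hcov hn
    ⟨g, hsub hg, hgD⟩).trans (measure_mono ?_)
  intro S hS f hf
  exact hS f (hsub hf)

end
end

section
/- Let β ∈ (0,1), let Ω = [0,1] with the standard metric, let μ be the probability measure on [0,1] with density proportional to |x − 1/2|^{(β−1)/2} with respect to Lebesgue measure, and let f(x) = 1[x > 1/2]. Then: (i) Λ̄_f^β(μ) < ∞ (f is average-β-Hölder with respect to μ); (ii) sup_{x∈[0,1]} Λ_f^β(x) = ∞ (f is not β-Hölder with any finite constant); and (iii) Λ̃_f^1(μ) = ∞ (f is not weakly-average-Lipschitz with any finite modulus). -/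
open MeasureTheory Set Metric
open scoped ENNReal NNReal

noncomputable section

lemma aux_fin (a : ℝ) (ha : -1 < a) :
    ∫⁻ z : Set.Icc (0:ℝ) 1, ENNReal.ofReal (|(z : ℝ) - 1 / 2| ^ a)
      ∂((volume : Measure ℝ).comap Subtype.val) ≠ ⊤ := by
  rw [lintegral_subtype_comap (measurableSet_Icc)
    (fun x : ℝ => ENNReal.ofReal (|x - 1 / 2| ^ a))]
  have h0 : IntervalIntegrable (fun x : ℝ => x ^ a) volume 0 (1/2) :=
    intervalIntegral.intervalIntegrable_rpow' ha
  have h1 : IntervalIntegrable (fun x : ℝ => |x - 1 / 2| ^ a) volume (1/2) 1 := by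
    have h := h0.comp_sub_right (1/2)
    norm_num at h
    refine IntervalIntegrable.congr ?_ h
    intro x hx
    rw [uIoc_of_le (by norm_num)] at hx
    have : 0 ≤ x - 1/2 := by linarith [hx.1]
    simp only
    rw [abs_of_nonneg this]
  have h2 : IntervalIntegrable (fun x : ℝ => |x - 1 / 2| ^ a) volume 0 (1/2) := by
    have h := (h0.comp_sub_left (1/2)).symm
    norm_num at h
    norm_num
    refine IntervalIntegrable.congr ?_ h
    intro x hx
    rw [uIoc_of_le (by norm_num)] at hx
    have : x - 1/2 ≤ 0 := by linarith [hx.2]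
    simp only
    rw [abs_of_nonpos this]
    norm_num
  have h3 := h2.trans h1
  rw [intervalIntegrable_iff_integrableOn_Icc_of_le (by norm_num)] at h3
  exact (Integrable.lintegral_lt_top h3).ne

lemma aux_lower (f : (Set.Icc (0:ℝ) 1) → ℝ)
    (hfdef : ∀ z, f z = if 1 / 2 < (z : ℝ) then 1 else 0) (γ : ℝ)
    (x : Set.Icc (0:ℝ) 1) (hx : 1 / 2 < (x : ℝ)) :
    ENNReal.ofReal (((x : ℝ) - 1 / 2) ^ (-γ)) ≤ hslope γ f x := by
  have hy : (1/2 : ℝ) ∈ Set.Icc (0:ℝ) 1 := by constructor <;> norm_num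
  have hne : (⟨1/2, hy⟩ : Set.Icc (0:ℝ) 1) ≠ x := by
    intro h
    rw [← h] at hx
    exact lt_irrefl _ hx
  refine le_trans (le_of_eq ?_) (le_iSup₂ (f := fun (y : Set.Icc (0:ℝ) 1) (_ : y ≠ x) =>
    ENNReal.ofReal (|f x - f y| / dist x y ^ γ)) ⟨1/2, hy⟩ hne)
  have hp : 0 < (x:ℝ) - 1/2 := by linarith
  simp only [hfdef, Subtype.dist_eq, Real.dist_eq, if_pos hx, lt_irrefl, if_false]
  rw [abs_of_pos hp, Real.rpow_neg hp.le]
  norm_num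

lemma aux_upper (f : (Set.Icc (0:ℝ) 1) → ℝ)
    (hfdef : ∀ z, f z = if 1 / 2 < (z : ℝ) then 1 else 0) (γ : ℝ) (hγ : 0 ≤ γ)
    (x : Set.Icc (0:ℝ) 1) (hx : (x : ℝ) ≠ 1 / 2) :
    hslope γ f x ≤ ENNReal.ofReal (|(x : ℝ) - 1 / 2| ^ (-γ)) := by
  have hp : 0 < |(x:ℝ) - 1/2| := abs_pos.2 (sub_ne_zero.2 hx)
  refine iSup₂_le fun y hy => ENNReal.ofReal_le_ofReal ?_
  have key : |(x:ℝ) - 1/2| ≤ |(x:ℝ) - y| →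
      1 / |(x:ℝ) - y| ^ γ ≤ |(x : ℝ) - 1 / 2| ^ (-γ) := by
    intro h
    rw [Real.rpow_neg hp.le, one_div]
    gcongr
  rw [Subtype.dist_eq, Real.dist_eq, hfdef, hfdef]
  split_ifs with h1 h2 h2
  · simp; positivity
  · rw [sub_zero, abs_one]
    apply key
    push Not at h2
    rw [abs_of_pos (by linarith), abs_of_pos (by linarith)]; linarith
  · rw [zero_sub, abs_neg, abs_one]
    apply key
    push Not at h1
    rw [abs_of_nonpos (by linarith), abs_of_nonpos (by linarith)]; linarith
  · simp; positivity

lemma aux_meas (a : ℝ) : Measurable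
    (fun z : Set.Icc (0:ℝ) 1 => ENNReal.ofReal (|(z : ℝ) - 1 / 2| ^ a)) := by
  have : Measurable (fun z : Set.Icc (0:ℝ) 1 => |(z : ℝ) - 1 / 2|) :=
    (continuous_abs.comp (continuous_subtype_val.sub continuous_const)).measurable
  exact (this.pow_const a).ennreal_ofReal

/-- Mass of a right neighbourhood of `1/2`. -/
lemma aux_mass (β : ℝ) (hβ1 : β < 1) (t : ℝ) (ht : 2 ≤ t) :
    ENNReal.ofReal (t ^ (-((β + 1) / 2))) ≤
    (((volume : Measure ℝ).comap Subtype.val).withDensity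
      fun z : Set.Icc (0:ℝ) 1 => ENNReal.ofReal (|(z : ℝ) - 1 / 2| ^ ((β - 1) / 2)))
      (Subtype.val ⁻¹' Ioc (1/2 : ℝ) (1/2 + t⁻¹)) := by
  have htp : 0 < t := by linarith
  have hti : t⁻¹ ≤ 1/2 := by
    rw [inv_le_comm₀ htp (by norm_num)]; norm_num; exact ht
  have hm : MeasurableSet ((Subtype.val : Set.Icc (0:ℝ) 1 → ℝ) ⁻¹' Ioc (1/2 : ℝ) (1/2 + t⁻¹)) :=
    measurable_subtype_coe measurableSet_Ioc
  rw [withDensity_apply _ hm]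
  calc ENNReal.ofReal (t ^ (-((β + 1) / 2)))
      = ENNReal.ofReal (t⁻¹ ^ ((β - 1) / 2)) *
        ((volume : Measure ℝ).comap Subtype.val)
        ((Subtype.val : Set.Icc (0:ℝ) 1 → ℝ) ⁻¹' Ioc (1/2 : ℝ) (1/2 + t⁻¹)) := by
        rw [(MeasurableEmbedding.subtype_coe measurableSet_Icc).comap_apply,
          Subtype.image_preimage_coe, inter_eq_self_of_subset_right, Real.volume_Ioc,
          ← ENNReal.ofReal_mul (by positivity)]
        · congr 1
          rw [add_sub_cancel_left, Real.inv_rpow htp.le, ← Real.rpow_neg htp.le,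
            ← Real.rpow_neg_one t, ← Real.rpow_add htp]
          congr 1; ring
        · intro x hx
          exact ⟨by linarith [hx.1], by linarith [hx.2]⟩
    _ = ∫⁻ z in ((Subtype.val : Set.Icc (0:ℝ) 1 → ℝ) ⁻¹' Ioc (1/2 : ℝ) (1/2 + t⁻¹)),
          ENNReal.ofReal (t⁻¹ ^ ((β - 1) / 2)) ∂((volume : Measure ℝ).comap Subtype.val) := by
        rw [setLIntegral_const]
    _ ≤ _ := by
        refine setLIntegral_mono' hm fun z hz => ENNReal.ofReal_le_ofReal ?_
        have h1 : 0 < (z:ℝ) - 1/2 := by linarith [hz.1]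
        rw [abs_of_pos h1]
        exact Real.rpow_le_rpow_of_nonpos h1 (by linarith [hz.2]) (by linarith)

/-- Claim: a function that is average-β-Hölder but neither β-Hölder
nor weakly-average-Lipschitz. -/
theorem avg_holder_not_holder_not_weak_lip
    (β : ℝ) (hβ0 : 0 < β) (hβ1 : β < 1)
    (f : (Set.Icc (0:ℝ) 1) → ℝ)
    (hfdef : ∀ z, f z = if 1 / 2 < (z : ℝ) then 1 else 0)
    (ν : Measure (Set.Icc (0:ℝ) 1))
    (hν : ν = ((volume : Measure ℝ).comap Subtype.val).withDensity
      fun z => ENNReal.ofReal (|(z : ℝ) - 1 / 2| ^ ((β - 1) / 2)))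
    (μ : Measure (Set.Icc (0:ℝ) 1)) (hμ : μ = (ν Set.univ)⁻¹ • ν) :
    IsProbabilityMeasure μ ∧
    avgSlope μ β f ≠ ⊤ ∧
    (⨆ x : (Set.Icc (0:ℝ) 1), hslope β f x) = ⊤ ∧
    weakAvgSlope μ 1 f = ⊤ := by
  have hfin : ν univ ≠ ⊤ := by
    rw [hν, withDensity_apply _ MeasurableSet.univ, Measure.restrict_univ]
    exact aux_fin _ (by linarith)
  have hpos : ν univ ≠ 0 := by
    have h := aux_mass β hβ1 2 le_rfl
    rw [← hν] at h
    refine ne_of_gt (lt_of_lt_of_le ?_ (h.trans (measure_mono (subset_univ _))))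
    rw [ENNReal.ofReal_pos]; positivity
  refine ⟨⟨?_⟩, ?_, ?_, ?_⟩
  · rw [hμ, Measure.smul_apply, smul_eq_mul, ENNReal.inv_mul_cancel hpos hfin]
  · unfold avgSlope
    rw [hμ, lintegral_smul_measure, smul_eq_mul]
    refine ENNReal.mul_ne_top (ENNReal.inv_ne_top.2 hpos) ?_
    refine ne_top_of_le_ne_top (aux_fin ((-β - 1) / 2) (by linarith)) ?_
    rw [hν]
    refine (lintegral_withDensity_le_lintegral_mul _ (aux_meas _) _).trans ?_
    refine lintegral_mono fun z => ?_
    simp only [Pi.mul_apply]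
    by_cases hz : (z : ℝ) = 1 / 2
    · rw [hz, sub_self, abs_zero, Real.zero_rpow (by linarith)]
      simp
    · have hp : 0 < |(z:ℝ) - 1/2| := abs_pos.2 (sub_ne_zero.2 hz)
      refine (mul_le_mul_right (aux_upper f hfdef β hβ0.le z hz) _).trans (le_of_eq ?_)
      rw [← ENNReal.ofReal_mul (by positivity), ← Real.rpow_add hp]
      congr 2; ring
  · have hT : Filter.Tendsto (fun t : ℝ => ENNReal.ofReal (t ^ β)) Filter.atTop (nhds ⊤) :=
      ENNReal.tendsto_ofReal_atTop.comp (tendsto_rpow_atTop hβ0)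
    refine top_le_iff.1 (le_of_tendsto hT ?_)
    filter_upwards [Filter.eventually_ge_atTop (2:ℝ)] with t ht
    have htp : 0 < t := by linarith
    have hti : t⁻¹ ≤ 1/2 := by
      rw [inv_le_comm₀ htp (by norm_num)]; norm_num; exact ht
    have hip : 0 < t⁻¹ := by positivity
    have hmem : 1/2 + t⁻¹ ∈ Set.Icc (0:ℝ) 1 := ⟨by linarith, by linarith⟩
    refine le_trans ?_ (le_iSup (fun x => hslope β f x) ⟨1/2 + t⁻¹, hmem⟩)
    refine le_trans (le_of_eq ?_)
      (aux_lower f hfdef β ⟨1/2 + t⁻¹, hmem⟩ (by simp only; linarith))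
    simp only
    rw [add_sub_cancel_left, Real.inv_rpow htp.le, Real.rpow_neg htp.le, inv_inv]
  · have hT : Filter.Tendsto (fun t : ℝ => (ν univ)⁻¹ * ENNReal.ofReal (t ^ ((1 - β) / 2)))
        Filter.atTop (nhds ⊤) := by
      have h := ENNReal.Tendsto.const_mul (a := (ν univ)⁻¹) (ENNReal.tendsto_ofReal_atTop.comp
        (tendsto_rpow_atTop (y := (1 - β) / 2) (by linarith))) (Or.inl ENNReal.top_ne_zero)
      rw [ENNReal.mul_top (ENNReal.inv_ne_zero.2 hfin)] at h
      exact h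
    refine top_le_iff.1 (le_of_tendsto hT ?_)
    filter_upwards [Filter.eventually_ge_atTop (2:ℝ)] with t ht
    have htp : 0 < t := by linarith
    refine le_trans ?_ (le_iSup₂ (f := fun (t : ℝ) (_ : 0 < t) =>
      ENNReal.ofReal t * μ {x | ENNReal.ofReal t ≤ hslope 1 f x}) t htp)
    have hsub : (Subtype.val ⁻¹' Ioc (1/2 : ℝ) (1/2 + t⁻¹) : Set (Set.Icc (0:ℝ) 1)) ⊆
        {x | ENNReal.ofReal t ≤ hslope 1 f x} := by
      intro x hx
      refine le_trans (ENNReal.ofReal_le_ofReal ?_) (aux_lower f hfdef 1 x hx.1)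
      have h1 : 0 < (x:ℝ) - 1/2 := by linarith [hx.1]
      rw [Real.rpow_neg_one, le_inv_comm₀ htp h1]
      linarith [hx.2]
    have hm := aux_mass β hβ1 t ht
    rw [← hν] at hm
    have hm2 := hm.trans (measure_mono hsub)
    rw [hμ, Measure.smul_apply, smul_eq_mul, mul_left_comm]
    refine mul_le_mul_right ?_ _
    refine le_trans (le_of_eq ?_) (mul_le_mul_right hm2 _)
    rw [← ENNReal.ofReal_mul htp.le]
    congr 1
    nth_rewrite 2 [← Real.rpow_one t]
    rw [← Real.rpow_add htp]
    congr 1; ring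

end
end
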